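/- Basis functions for the second enriched triple: with the setting of the second family (affinely independent v₁, v₂, v₃, barycentric coordinates λᵢ, edge parametrizations γⱼ, density g̃_{σ,μ}, polynomial q_{σ,μ}, μ ≥ 1, σ > 0), define ηᵢ = 1 - 2λᵢ and ρᵢ = -C_{σ,μ} ηᵢ + (2/‖q_{σ,μ}‖²_{2,σ,μ})(-λᵢ² + λ_{i+1}² + λ_{i+2}²) for i = 1,2,3, where ‖q_{σ,μ}‖²_{2,σ,μ} = ∫_{-1}^{1} q_{σ,μ}(t)² g̃_{σ,μ}(t) dt and C_{σ,μ} = (1 + s_{2,σ,μ})/‖q_{σ,μ}‖²_{2,σ,μ}. Then for all i, j ∈ {1,2,3}: D_j(ηᵢ) = δᵢⱼ, S_j(ηᵢ) = 0, D_j(ρᵢ) = 0, and S_j(ρᵢ) = δᵢⱼ, where D_j(f) = ∫_{-1}^{1} f(γⱼ(t)) g̃_{σ,μ}(t) dt and S_j(f) = ∫_{-1}^{1} q_{σ,μ}(t) f(γⱼ(t)) g̃_{σ,μ}(t) dt. -/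

import Mathlib

/-!
On the edge opposite to `v j`, parametrized by `t ∈ [-1, 1]`, the barycentric coordinates are `0`,
`(1 + t) / 2` and `(1 - t) / 2`. Hence `η_j = 1` and `ρ_j = q / ‖q‖²` there, so the diagonal
relations say that the density has unit mass, that `q` has mean zero, and that `‖q‖² ≠ 0`. For
`i ≠ j` the restriction of `η_i` is `± t` and that of `ρ_i` is a multiple of it; as `q` and the
density are even, every integrand is odd. The unit mass is the substitution `u = z t ^ (4 μ - 2)`
in the incomplete gamma integral.
-/

open MeasureTheory

/-- Lower incomplete gamma function `γ(s,z) = ∫₀^z u^(s-1) e^(-u) du`. -/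
noncomputable def lowGamma (s z : ℝ) : ℝ := ∫ u in (0:ℝ)..z, u ^ (s - 1) * Real.exp (-u)

/-- Modified lower incomplete gamma function `γ^mod(s,z) = γ(s,z)/z^s`. -/
noncomputable def gammaMod (s z : ℝ) : ℝ := lowGamma s z / z ^ s

/-- Second family of densities `g̃_{σ,μ}` on `[-1,1]`. -/
noncomputable def gTilde (σ μ t : ℝ) : ℝ :=
  ((2 * μ - 1) / gammaMod (1 / 2) (1 / (2 * σ ^ (4 * μ - 2)))) *
    (t ^ 2) ^ (μ - 1) * Real.exp (-(1 / 2) * (t ^ 2 / σ ^ 2) ^ (2 * μ - 1))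

/-- Second moment `s_{2,σ,μ}` of `g̃_{σ,μ}`. -/
noncomputable def sMom2 (σ μ : ℝ) : ℝ := ∫ t in (-1:ℝ)..1, t ^ 2 * gTilde σ μ t

/-- The orthogonal quadratic polynomial `q_{σ,μ}(t) = t² - s_{2,σ,μ}`. -/
noncomputable def qPoly (σ μ t : ℝ) : ℝ := t ^ 2 - sMom2 σ μ

/-- The squared norm `‖q_{σ,μ}‖²_{2,σ,μ}`. -/
noncomputable def qNormSq (σ μ : ℝ) : ℝ :=
  ∫ t in (-1:ℝ)..1, (qPoly σ μ t) ^ 2 * gTilde σ μ t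

/-- The coefficient `C_{σ,μ} = (1 + s_{2,σ,μ})/‖q_{σ,μ}‖²_{2,σ,μ}`. -/
noncomputable def Ccoef (σ μ : ℝ) : ℝ := (1 + sMom2 σ μ) / qNormSq σ μ

/-- Parametrization of the edge `s_j` of the triangle, opposite to the vertex `v j`
(indices taken cyclically in `Fin 3`). -/
noncomputable def edgeParam (v : Fin 3 → ℝ × ℝ) (j : Fin 3) (t : ℝ) : ℝ × ℝ :=
  ((1 + t) / 2) • v (j + 1) + ((1 - t) / 2) • v (j + 2)

/-- The basis function `ηᵢ = 1 - 2λᵢ`. -/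
def etaB (lam : Fin 3 → ℝ × ℝ → ℝ) (i : Fin 3) (x : ℝ × ℝ) : ℝ := 1 - 2 * lam i x

/-- The basis function
`ρᵢ = -C_{σ,μ} ηᵢ + (2/‖q_{σ,μ}‖²_{2,σ,μ})(-λᵢ² + λ_{i+1}² + λ_{i+2}²)`. -/
noncomputable def rhoB (σ μ : ℝ) (lam : Fin 3 → ℝ × ℝ → ℝ) (i : Fin 3) (x : ℝ × ℝ) : ℝ :=
  -Ccoef σ μ * etaB lam i x
    + (2 / qNormSq σ μ) * (-(lam i x) ^ 2 + (lam (i + 1) x) ^ 2 + (lam (i + 2) x) ^ 2)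

section SymmetricIntervals

variable {E : Type*} [NormedAddCommGroup E] [NormedSpace ℝ E]

theorem integral_of_odd {f : ℝ → E} (hf : f.Odd) (a : ℝ) : ∫ t in (-a)..a, f t = 0 := by
  have : IsAddTorsionFree E := .of_isTorsionFree ℝ E
  have h := intervalIntegral.integral_comp_neg (a := -a) (b := a) f
  simp only [hf.eq, neg_neg, intervalIntegral.integral_neg] at h
  exact neg_eq_self.mp h

theorem integral_of_even {f : ℝ → E} (hf : f.Even) {a : ℝ}
    (hfi : IntervalIntegrable f volume (-a) a) :
    ∫ t in (-a)..a, f t = (2 : ℝ) • ∫ t in (0 : ℝ)..a, f t := by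
  have hzero : (0 : ℝ) ∈ Set.uIcc (-a) a := by
    rcases le_total 0 a with h | h <;> simp [h]
  have hneg : ∫ t in (-a)..0, f t = ∫ t in (0 : ℝ)..a, f t := by
    have h := intervalIntegral.integral_comp_neg (a := 0) (b := a) f
    simpa only [hf.eq, neg_zero] using h.symm
  rw [← intervalIntegral.integral_add_adjacent_intervals
    (hfi.mono_set (Set.uIcc_subset_uIcc_left hzero))
    (hfi.mono_set (Set.uIcc_subset_uIcc_right hzero)), hneg, two_smul]

end SymmetricIntervals

theorem intervalIntegral_pos_of_ae_pos {f : ℝ → ℝ} {a b : ℝ} (hab : a < b)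
    (hfi : IntervalIntegrable f volume a b) (hf : ∀ᵐ t, 0 < f t) : 0 < ∫ t in a..b, f t := by
  have hsupp : volume (Function.support f)ᶜ = 0 := mem_ae_iff.mp (hf.mono fun _ ht => ht.ne')
  rw [intervalIntegral.integral_pos_iff_support_of_nonneg_ae (hf.mono fun _ ht => ht.le) hfi,
    Set.inter_comm, measure_inter_conull hsupp, Real.volume_Ioc]
  exact ⟨hab, ENNReal.ofReal_pos.mpr (sub_pos.mpr hab)⟩

theorem integral_sub_mean_mul {f w : ℝ → ℝ} {a b : ℝ} (hw : IntervalIntegrable w volume a b)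
    (hfw : IntervalIntegrable (fun t => f t * w t) volume a b) (hmass : ∫ t in a..b, w t = 1) :
    ∫ t in a..b, (f t - ∫ s in a..b, f s * w s) * w t = 0 := by
  simp only [sub_mul]
  rw [intervalIntegral.integral_sub hfw (hw.const_mul _), intervalIntegral.integral_const_mul,
    hmass, mul_one, sub_self]

theorem image_rpow_Ioc_zero {p b : ℝ} (hp : 0 < p) (hb : 0 ≤ b) :
    (· ^ p) '' Set.Ioc 0 b = Set.Ioc 0 (b ^ p) := by
  ext u
  constructor
  · rintro ⟨t, ht, rfl⟩
    exact ⟨Real.rpow_pos_of_pos ht.1 p, Real.rpow_le_rpow ht.1.le ht.2 hp.le⟩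
  · intro hu
    refine ⟨u ^ p⁻¹, ⟨Real.rpow_pos_of_pos hu.1 _, ?_⟩, Real.rpow_inv_rpow hu.1.le hp.ne'⟩
    exact (Real.rpow_inv_le_iff_of_pos hu.1.le hb hp).mpr hu.2

theorem integral_comp_rpow_zero {E : Type*} [NormedAddCommGroup E] [NormedSpace ℝ E] (g : ℝ → E)
    {p b : ℝ} (hp : 0 < p) (hb : 0 ≤ b) :
    ∫ t in (0 : ℝ)..b, (p * t ^ (p - 1)) • g (t ^ p) = ∫ u in (0 : ℝ)..b ^ p, g u := by
  rw [intervalIntegral.integral_of_le hb, intervalIntegral.integral_of_le (Real.rpow_nonneg hb p),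
    ← image_rpow_Ioc_zero hp hb]
  exact (integral_image_eq_integral_deriv_smul_of_monotoneOn measurableSet_Ioc
    (fun t ht => (Real.hasDerivAt_rpow_const (Or.inl ht.1.ne')).hasDerivWithinAt)
    (fun x hx y _ hxy => Real.rpow_le_rpow hx.1.le hxy hp.le) g).symm

theorem gammaMod_eq_integral (s : ℝ) {z : ℝ} (hz : 0 < z) :
    gammaMod s z = ∫ u in (0 : ℝ)..1, u ^ (s - 1) * Real.exp (-(z * u)) := by
  have hscale : lowGamma s z
      = z * ∫ u in (0 : ℝ)..1, (z * u) ^ (s - 1) * Real.exp (-(z * u)) := by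
    have h := intervalIntegral.smul_integral_comp_mul_left (a := 0) (b := 1)
      (fun u : ℝ => u ^ (s - 1) * Real.exp (-u)) z
    simpa only [lowGamma, smul_eq_mul, mul_zero, mul_one] using h.symm
  have hpull : ∫ u in (0 : ℝ)..1, (z * u) ^ (s - 1) * Real.exp (-(z * u))
      = z ^ (s - 1) * ∫ u in (0 : ℝ)..1, u ^ (s - 1) * Real.exp (-(z * u)) := by
    rw [← intervalIntegral.integral_const_mul]
    refine intervalIntegral.integral_congr fun u hu => ?_
    rw [Set.uIcc_of_le zero_le_one] at hu
    simp only [Real.mul_rpow hz.le hu.1, mul_assoc]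
  rw [gammaMod, hscale, hpull, Real.rpow_sub_one hz.ne']
  field_simp

theorem gammaMod_eq_integral_rpow (s : ℝ) {z p : ℝ} (hz : 0 < z) (hp : 0 < p) :
    gammaMod s z = p * ∫ t in (0 : ℝ)..1, t ^ (p * s - 1) * Real.exp (-(z * t ^ p)) := by
  have hsubst := integral_comp_rpow_zero
    (fun u => u ^ (s - 1) * Real.exp (-(z * u))) hp zero_le_one
  rw [Real.one_rpow] at hsubst
  rw [gammaMod_eq_integral s hz, ← hsubst, ← intervalIntegral.integral_const_mul]
  refine intervalIntegral.integral_congr_Ioo_of_le zero_le_one fun t ht => ?_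
  have hpow : t ^ (p - 1) * (t ^ p) ^ (s - 1) = t ^ (p * s - 1) := by
    rw [← Real.rpow_mul ht.1.le, ← Real.rpow_add ht.1]
    ring_nf
  simp only [smul_eq_mul, ← hpow]
  ring

theorem gammaMod_pos {s z : ℝ} (hs : 0 < s) (hz : 0 < z) : 0 < gammaMod s z := by
  rw [gammaMod_eq_integral s hz]
  refine intervalIntegral.intervalIntegral_pos_of_pos_on ?_ (fun u hu => ?_) zero_lt_one
  · exact (intervalIntegral.intervalIntegrable_rpow' (by linarith)).mul_continuousOn
      (by fun_prop)
  · exact mul_pos (Real.rpow_pos_of_pos hu.1 _) (Real.exp_pos _)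

section Density

variable {σ μ : ℝ}

theorem gTilde_even (σ μ : ℝ) : (gTilde σ μ).Even := fun t => by
  simp only [gTilde, even_two.neg_pow]

theorem qPoly_even (σ μ : ℝ) : (qPoly σ μ).Even := fun t => by
  simp only [qPoly, even_two.neg_pow]

theorem continuous_qPoly (σ μ : ℝ) : Continuous (qPoly σ μ) := by
  unfold qPoly
  fun_prop

theorem gTilde_of_nonneg (hσ : 0 ≤ σ) (μ : ℝ) {t : ℝ} (ht : 0 ≤ t) :
    gTilde σ μ t = (2 * μ - 1) / gammaMod (1 / 2) (1 / (2 * σ ^ (4 * μ - 2))) *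
      (t ^ ((4 * μ - 2) * (1 / 2) - 1) *
        Real.exp (-(1 / (2 * σ ^ (4 * μ - 2)) * t ^ (4 * μ - 2)))) := by
  have sq_rpow {x : ℝ} (hx : 0 ≤ x) (r : ℝ) : (x ^ 2) ^ r = x ^ (2 * r) := by
    rw [← Real.rpow_natCast_mul hx, Nat.cast_ofNat]
  rw [gTilde, Real.div_rpow (sq_nonneg t) (sq_nonneg σ), sq_rpow ht, sq_rpow ht, sq_rpow hσ]
  ring_nf

-- The density is of order `|t| ^ (2 μ - 2)` at `0`: unbounded for `μ < 1`, but still integrable.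
theorem intervalIntegrable_gTilde (hσ : 0 ≤ σ) (hμ : 1 / 2 < μ) (a b : ℝ) :
    IntervalIntegrable (gTilde σ μ) volume a b := by
  refine intervalIntegrable_of_even (fun t => ((gTilde_even σ μ).eq t).symm)
    fun x hx => ?_
  have hexp : Continuous fun t : ℝ =>
      Real.exp (-(1 / (2 * σ ^ (4 * μ - 2)) * t ^ (4 * μ - 2))) :=
    Real.continuous_exp.comp
      ((Real.continuous_rpow_const (by linarith)).const_mul _).neg
  have hker := ((intervalIntegral.intervalIntegrable_rpow' (a := 0) (b := x)
    (r := (4 * μ - 2) * (1 / 2) - 1) (by linarith)).mul_continuousOn hexp.continuousOn).const_mul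
      ((2 * μ - 1) / gammaMod (1 / 2) (1 / (2 * σ ^ (4 * μ - 2))))
  refine hker.congr fun t ht => (gTilde_of_nonneg hσ μ ?_).symm
  rw [Set.uIoc_of_le hx.le] at ht
  exact ht.1.le

theorem integral_gTilde (hσ : 0 < σ) (hμ : 1 / 2 < μ) : ∫ t in (-1 : ℝ)..1, gTilde σ μ t = 1 := by
  have hz : 0 < 1 / (2 * σ ^ (4 * μ - 2)) := by positivity
  have hγ := gammaMod_pos one_half_pos hz
  have hhalf : (4 * μ - 2) * ∫ t in (0 : ℝ)..1, gTilde σ μ t = 2 * μ - 1 := by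
    rw [intervalIntegral.integral_congr_Ioo_of_le zero_le_one
        fun t ht => gTilde_of_nonneg hσ.le μ ht.1.le,
      intervalIntegral.integral_const_mul, mul_left_comm,
      ← gammaMod_eq_integral_rpow (1 / 2) hz (by linarith), div_mul_cancel₀ _ hγ.ne']
  rw [integral_of_even (gTilde_even σ μ) (intervalIntegrable_gTilde hσ.le hμ _ _), smul_eq_mul]
  refine mul_left_cancel₀ (show 2 * μ - 1 ≠ 0 by linarith) ?_
  linarith

theorem gTilde_pos (hσ : 0 < σ) (hμ : 1 / 2 < μ) {t : ℝ} (ht : t ≠ 0) : 0 < gTilde σ μ t := by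
  have hγ : 0 < gammaMod (1 / 2) (1 / (2 * σ ^ (4 * μ - 2))) :=
    gammaMod_pos one_half_pos (by positivity)
  have hμ' : 0 < 2 * μ - 1 := by linarith
  unfold gTilde
  positivity

theorem integral_qPoly_mul_gTilde (hσ : 0 < σ) (hμ : 1 / 2 < μ) :
    ∫ t in (-1 : ℝ)..1, qPoly σ μ t * gTilde σ μ t = 0 :=
  have hg := intervalIntegrable_gTilde hσ.le hμ (-1) 1
  integral_sub_mean_mul hg (hg.continuousOn_mul (continuous_pow 2).continuousOn)
    (integral_gTilde hσ hμ)

theorem qNormSq_pos (hσ : 0 < σ) (hμ : 1 / 2 < μ) : 0 < qNormSq σ μ := by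
  refine intervalIntegral_pos_of_ae_pos (by norm_num)
    ((intervalIntegrable_gTilde hσ.le hμ _ _).continuousOn_mul
      ((continuous_qPoly σ μ).pow 2).continuousOn) ?_
  have hfin : ({0, √(sMom2 σ μ), -√(sMom2 σ μ)} : Set ℝ).Finite := Set.toFinite _
  filter_upwards [hfin.countable.ae_notMem volume] with t ht
  simp only [Set.mem_insert_iff, Set.mem_singleton_iff, not_or] at ht
  have hq : qPoly σ μ t ≠ 0 := fun h => by
    have hsq : t ^ 2 = sMom2 σ μ := sub_eq_zero.mp h
    have habs : |t| = √(sMom2 σ μ) := by rw [← hsq, Real.sqrt_sq_eq_abs]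
    rcases abs_choice t with hcase | hcase
    · exact ht.2.1 (by rw [← habs, hcase])
    · exact ht.2.2 (by rw [← habs, hcase, neg_neg])
  exact mul_pos (sq_pos_of_ne_zero hq) (gTilde_pos hσ hμ ht.1)

end Density

theorem eq_add_one_or_eq_add_two_of_ne {i j : Fin 3} (hij : i ≠ j) : i = j + 1 ∨ i = j + 2 := by
  decide +revert

theorem affineMap_edgeParam (A : (ℝ × ℝ) →ᵃ[ℝ] ℝ) (v : Fin 3 → ℝ × ℝ) (j : Fin 3) (t : ℝ) :
    A (edgeParam v j t) = (1 + t) / 2 * A (v (j + 1)) + (1 - t) / 2 * A (v (j + 2)) := by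
  have hline : edgeParam v j t = AffineMap.lineMap (v (j + 2)) (v (j + 1)) ((1 + t) / 2) := by
    rw [AffineMap.lineMap_apply_module, edgeParam, add_comm,
      show 1 - (1 + t) / 2 = (1 - t) / 2 by ring]
  rw [hline, AffineMap.apply_lineMap, AffineMap.lineMap_apply_module, smul_eq_mul, smul_eq_mul]
  ring

/-- The functions `lam i` are the barycentric coordinates of the triangle with vertices `v`. They
are plain functions with a separate affineness condition, as `etaB` and `rhoB` expect. -/
structure IsBarycentricCoords (v : Fin 3 → ℝ × ℝ) (lam : Fin 3 → ℝ × ℝ → ℝ) : Prop where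
  exists_affineMap : ∀ i, ∃ A : (ℝ × ℝ) →ᵃ[ℝ] ℝ, ∀ x, lam i x = A x
  apply_vertex : ∀ i j, lam i (v j) = if i = j then (1 : ℝ) else 0

namespace IsBarycentricCoords

variable {v : Fin 3 → ℝ × ℝ} {lam : Fin 3 → ℝ × ℝ → ℝ}

theorem lam_edgeParam (h : IsBarycentricCoords v lam) (i j : Fin 3) (t : ℝ) :
    lam i (edgeParam v j t) = (1 + t) / 2 * (if i = j + 1 then 1 else 0)
      + (1 - t) / 2 * (if i = j + 2 then 1 else 0) := by
  obtain ⟨A, hA⟩ := h.exists_affineMap i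
  rw [hA, affineMap_edgeParam, ← hA, ← hA, h.apply_vertex, h.apply_vertex]

theorem lam_edgeParam_self (h : IsBarycentricCoords v lam) (j : Fin 3) (t : ℝ) :
    lam j (edgeParam v j t) = 0 := by
  simp [h.lam_edgeParam]

theorem lam_edgeParam_add_one (h : IsBarycentricCoords v lam) (j : Fin 3) (t : ℝ) :
    lam (j + 1) (edgeParam v j t) = (1 + t) / 2 := by
  simp [h.lam_edgeParam]

theorem lam_edgeParam_add_two (h : IsBarycentricCoords v lam) (j : Fin 3) (t : ℝ) :
    lam (j + 2) (edgeParam v j t) = (1 - t) / 2 := by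
  simp [h.lam_edgeParam]

theorem etaB_edgeParam_self (h : IsBarycentricCoords v lam) (j : Fin 3) (t : ℝ) :
    etaB lam j (edgeParam v j t) = 1 := by
  rw [etaB, h.lam_edgeParam_self, mul_zero, sub_zero]

theorem etaB_edgeParam_odd (h : IsBarycentricCoords v lam) {i j : Fin 3} (hij : i ≠ j) :
    (fun t => etaB lam i (edgeParam v j t)).Odd := fun t => by
  rcases eq_add_one_or_eq_add_two_of_ne hij with rfl | rfl
  · simp only [etaB, h.lam_edgeParam_add_one]
    ring
  · simp only [etaB, h.lam_edgeParam_add_two]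
    ring

theorem rhoB_edgeParam_self (h : IsBarycentricCoords v lam) (σ μ : ℝ) (j : Fin 3) (t : ℝ) :
    rhoB σ μ lam j (edgeParam v j t) = qPoly σ μ t / qNormSq σ μ := by
  rw [rhoB, h.etaB_edgeParam_self, h.lam_edgeParam_self, h.lam_edgeParam_add_one,
    h.lam_edgeParam_add_two, Ccoef, qPoly]
  ring

-- If `a` is the value of `λ_i`, the squares contribute `(1 - a)² - a² = 1 - 2a`, again `η_i`.
theorem rhoB_edgeParam_of_ne (h : IsBarycentricCoords v lam) (σ μ : ℝ) {i j : Fin 3}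
    (hij : i ≠ j) (t : ℝ) :
    rhoB σ μ lam i (edgeParam v j t)
      = (2 / qNormSq σ μ - Ccoef σ μ) * etaB lam i (edgeParam v j t) := by
  rcases eq_add_one_or_eq_add_two_of_ne hij with rfl | rfl
  · have h₁ : j + 1 + 1 = j + 2 := by decide +revert
    have h₂ : j + 1 + 2 = j := by decide +revert
    rw [rhoB, etaB, h₁, h₂, h.lam_edgeParam_self, h.lam_edgeParam_add_one, h.lam_edgeParam_add_two]
    ring
  · have h₁ : j + 2 + 1 = j := by decide +revert
    have h₂ : j + 2 + 2 = j + 1 := by decide +revert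
    rw [rhoB, etaB, h₁, h₂, h.lam_edgeParam_self, h.lam_edgeParam_add_one, h.lam_edgeParam_add_two]
    ring

theorem rhoB_edgeParam_odd (h : IsBarycentricCoords v lam) (σ μ : ℝ) {i j : Fin 3} (hij : i ≠ j) :
    (fun t => rhoB σ μ lam i (edgeParam v j t)).Odd := by
  simpa only [h.rhoB_edgeParam_of_ne σ μ hij] using!
    (h.etaB_edgeParam_odd hij).const_smul (2 / qNormSq σ μ - Ccoef σ μ)

end IsBarycentricCoords

theorem basis_second_family_general (v : Fin 3 → ℝ × ℝ) (lam : Fin 3 → ℝ × ℝ → ℝ)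
    (hlam : ∀ i, ∃ A : (ℝ × ℝ) →ᵃ[ℝ] ℝ, ∀ x, lam i x = A x)
    (hkr : ∀ i j, lam i (v j) = if i = j then (1 : ℝ) else 0)
    (σ μ : ℝ) (hσ : 0 < σ) (hμ : 1 / 2 < μ) (i j : Fin 3) :
    (∫ t in (-1 : ℝ)..1, etaB lam i (edgeParam v j t) * gTilde σ μ t
        = if i = j then (1 : ℝ) else 0) ∧
    (∫ t in (-1 : ℝ)..1, qPoly σ μ t * etaB lam i (edgeParam v j t) * gTilde σ μ t = 0) ∧
    (∫ t in (-1 : ℝ)..1, rhoB σ μ lam i (edgeParam v j t) * gTilde σ μ t = 0) ∧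
    (∫ t in (-1 : ℝ)..1, qPoly σ μ t * rhoB σ μ lam i (edgeParam v j t) * gTilde σ μ t
        = if i = j then (1 : ℝ) else 0) := by
  have h : IsBarycentricCoords v lam := ⟨hlam, hkr⟩
  rcases eq_or_ne i j with rfl | hij
  · have hmean := integral_qPoly_mul_gTilde hσ hμ
    simp only [h.etaB_edgeParam_self, h.rhoB_edgeParam_self, one_mul, mul_one, if_true]
    refine ⟨integral_gTilde hσ hμ, hmean, ?_, ?_⟩
    · simp only [div_mul_eq_mul_div, intervalIntegral.integral_div, hmean, zero_div]
    · simp only [mul_div_assoc', ← sq, div_mul_eq_mul_div, intervalIntegral.integral_div]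
      exact div_self (qNormSq_pos hσ hμ).ne'
  · have hη := h.etaB_edgeParam_odd hij
    have hρ := h.rhoB_edgeParam_odd σ μ hij
    have hq := qPoly_even σ μ
    have hg := gTilde_even σ μ
    simp only [if_neg hij]
    exact ⟨integral_of_odd (hη.mul_even hg) 1, integral_of_odd ((hq.mul_odd hη).mul_even hg) 1,
      integral_of_odd (hρ.mul_even hg) 1, integral_of_odd ((hq.mul_odd hρ).mul_even hg) 1⟩

/-- The functions `ηᵢ, ρᵢ` form the dual basis of the enriched edge functionals
`D_j, S_j` of the second family. -/
theorem basis_second_family (v : Fin 3 → ℝ × ℝ) (hv : AffineIndependent ℝ v)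
    (lam : Fin 3 → ℝ × ℝ → ℝ)
    (hlam : ∀ i, ∃ A : (ℝ × ℝ) →ᵃ[ℝ] ℝ, ∀ x, lam i x = A x)
    (hkr : ∀ i j, lam i (v j) = if i = j then (1:ℝ) else 0)
    (σ μ : ℝ) (hσ : 0 < σ) (hμ : 1 ≤ μ)
    (i j : Fin 3) :
    (∫ t in (-1:ℝ)..1, etaB lam i (edgeParam v j t) * gTilde σ μ t
        = if i = j then (1:ℝ) else 0) ∧
    (∫ t in (-1:ℝ)..1, qPoly σ μ t * etaB lam i (edgeParam v j t) * gTilde σ μ t = 0) ∧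
    (∫ t in (-1:ℝ)..1, rhoB σ μ lam i (edgeParam v j t) * gTilde σ μ t = 0) ∧
    (∫ t in (-1:ℝ)..1, qPoly σ μ t * rhoB σ μ lam i (edgeParam v j t) * gTilde σ μ t
        = if i = j then (1:ℝ) else 0) :=
  basis_second_family_general v lam hlam hkr σ μ hσ (by linarith) i j
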